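/- arXiv:1903.02360 — 3 statements merged into one kernel-verified Lean document; each statement's English description precedes it below -/
import Mathlib

section
/- Assume D : 𝒞 → ℝⁿ satisfies (A1) and (A5). Let x, x̄ : [−r₀,∞) → ℝⁿ be continuous functions such that x(θ) ≤ x̄(θ) componentwise for all θ ∈ [−r₀,0] and x(0) − D(x₀) ≤ x̄(0) − D(x̄₀) componentwise (i.e. the initial segments satisfy x₀ ≤_D x̄₀). Define, in [0,∞] with inf ∅ = ∞, the hitting times ρ = inf{ t > 0 : xⁱ(t) > x̄ⁱ(t) for some 1 ≤ i ≤ n } and Υ = inf{ t > 0 : xⁱ(t) − Dⁱ(x_t) > x̄ⁱ(t) − Dⁱ(x̄_t) for some 1 ≤ i ≤ n }. Then Υ ≤ ρ. -/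
open MeasureTheory Filter
open scoped ENNReal NNReal

noncomputable section

/-- The path space 𝒞 = C([-r₀,0]; ℝⁿ), endowed with the uniform norm. -/
abbrev PathSp (r₀ : ℝ) (n : ℕ) := C(Set.Icc (-r₀) (0:ℝ), EuclideanSpace ℝ (Fin n))

/-- Componentwise pointwise order ξ ≤ η on the path space. -/
def PathLe {r₀ : ℝ} {n : ℕ} (ξ η : PathSp r₀ n) : Prop :=
  ∀ (θ : Set.Icc (-r₀) (0:ℝ)) (i : Fin n), ξ θ i ≤ η θ i

/-- The point 0 of the interval [-r₀,0]. -/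
def zpt {r₀ : ℝ} (hr₀ : 0 < r₀) : Set.Icc (-r₀) (0:ℝ) :=
  ⟨0, ⟨by linarith, le_refl 0⟩⟩

/-- max_{1≤i≤n} ‖ξⁱ − ηⁱ‖_∞. -/
def MaxCompDist {r₀ : ℝ} {n : ℕ} (ξ η : PathSp r₀ n) : ℝ :=
  ⨆ i : Fin n, ⨆ θ : Set.Icc (-r₀) (0:ℝ), |ξ θ i - η θ i|

/-- The order ξ ≤_D η on the path space: ξ ≤ η and ξ(0) − D(ξ) ≤ η(0) − D(η). -/
def PathLeD {r₀ : ℝ} (hr₀ : 0 < r₀) {n : ℕ}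
    (D : PathSp r₀ n → EuclideanSpace ℝ (Fin n)) (ξ η : PathSp r₀ n) : Prop :=
  PathLe ξ η ∧ ∀ i, ξ (zpt hr₀) i - D ξ i ≤ η (zpt hr₀) i - D η i

/-- The constant path r𝟙 all of whose components equal r. -/
def constPath (r₀ : ℝ) (n : ℕ) (r : ℝ) : PathSp r₀ n :=
  ContinuousMap.const _ ((WithLp.equiv 2 (Fin n → ℝ)).symm fun _ => r)

/-- The time shift [-r₀,0] ∋ θ ↦ t + θ ∈ [-r₀,∞) for t ≥ 0. -/
def segMap {r₀ : ℝ} (t : ℝ) (ht : 0 ≤ t) (θ : Set.Icc (-r₀) (0:ℝ)) : Set.Ici (-r₀ : ℝ) :=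
  ⟨t + θ.1, by have h := θ.2.1; simp only [Set.mem_Ici]; linarith⟩

/-- The segment x_t ∈ 𝒞 of a continuous function x : [-r₀,∞) → ℝⁿ, x_t(θ) = x(t+θ). -/
def segmentAt {r₀ : ℝ} {n : ℕ} (x : C(Set.Ici (-r₀ : ℝ), EuclideanSpace ℝ (Fin n)))
    (t : ℝ) (ht : 0 ≤ t) : PathSp r₀ n :=
  ⟨fun θ => x (segMap t ht θ),
   x.continuous.comp ((continuous_const.add continuous_subtype_val).subtype_mk _)⟩

/-- A point t ≥ 0 viewed as an element of [-r₀, ∞). -/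
def iciPt {r₀ : ℝ} (hr₀ : 0 < r₀) (t : ℝ) (ht : 0 ≤ t) : Set.Ici (-r₀ : ℝ) :=
  ⟨t, by simp only [Set.mem_Ici]; linarith⟩

/-- The path space carries the Borel σ-algebra. -/
instance instPathSpMeas (r₀ : ℝ) (n : ℕ) : MeasurableSpace (PathSp r₀ n) := borel _
instance (r₀ : ℝ) (n : ℕ) : BorelSpace (PathSp r₀ n) := ⟨rfl⟩

/-- A function f : 𝒞 → ℝ is D-increasing if ξ ≤_D η implies f(ξ) ≤ f(η). -/
def DIncreasing {r₀ : ℝ} (hr₀ : 0 < r₀) {n : ℕ}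
    (D : PathSp r₀ n → EuclideanSpace ℝ (Fin n)) (f : PathSp r₀ n → ℝ) : Prop :=
  ∀ ξ η, PathLeD hr₀ D ξ η → f ξ ≤ f η

/-- μ ≤_D ν : ∫ f dμ ≤ ∫ f dν for every bounded Borel measurable D-increasing f. -/
def MeasLeD {r₀ : ℝ} (hr₀ : 0 < r₀) {n : ℕ}
    (D : PathSp r₀ n → EuclideanSpace ℝ (Fin n)) (μ ν : Measure (PathSp r₀ n)) : Prop :=
  ∀ f : PathSp r₀ n → ℝ, Measurable f → (∃ C, ∀ ξ, |f ξ| ≤ C) →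
    DIncreasing hr₀ D f → ∫ ξ, f ξ ∂μ ≤ ∫ ξ, f ξ ∂ν

/-- π is a coupling of (μ, ν). -/
def IsCoupling {r₀ : ℝ} {n : ℕ} (π : Measure (PathSp r₀ n × PathSp r₀ n))
    (μ ν : Measure (PathSp r₀ n)) : Prop :=
  IsProbabilityMeasure π ∧ π.map Prod.fst = μ ∧ π.map Prod.snd = ν

/-- The L²-Wasserstein distance W₂(μ,ν) on the path space. -/
def W2 {r₀ : ℝ} {n : ℕ} (μ ν : Measure (PathSp r₀ n)) : ℝ :=
  Real.sqrt (⨅ π ∈ {π : Measure (PathSp r₀ n × PathSp r₀ n) | IsCoupling π μ ν},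
    ∫⁻ p, (‖p.1 - p.2‖₊ : ℝ≥0∞) ^ 2 ∂π).toReal

/-- μ ∈ 𝒫₂(𝒞): a Borel probability measure with finite second moment. -/
def P2 {r₀ : ℝ} {n : ℕ} (μ : Measure (PathSp r₀ n)) : Prop :=
  IsProbabilityMeasure μ ∧ Integrable (fun ξ : PathSp r₀ n => ‖ξ‖^2) μ

/-! Monotonicity and the Lipschitz bound combine into a one-sided estimate: if `ξ ≤ η + M𝟙` with
`M ≥ 0`, then `D ξ ≤ D (η + M𝟙) ≤ D η + κM𝟙`. Suppose `x(t) - D(x_t) ≤ y(t) - D(y_t)` for all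
`t ∈ (0, s]`, but `x ≤ y` fails somewhere on `[-r₀, s]`. Let `M > 0` be the maximum of
`xⁱ(t) - yⁱ(t)` over all `i` and all `t ≤ s`, attained at some `(i, t)`; the initial condition
forces `t > 0`. Then `x_t ≤ y_t + M𝟙`, so `M ≤ Dⁱ(x_t) - Dⁱ(y_t) ≤ κM < M`, a contradiction. -/

theorem sInf_ofReal_le_sInf_ofReal {P Q : (t : ℝ) → 0 < t → Prop}
    (h : ∀ s hs, Q s hs → ∃ t, ∃ ht : 0 < t, t ≤ s ∧ P t ht) :
    sInf {T : ℝ≥0∞ | ∃ t : ℝ, ∃ ht : 0 < t, T = ENNReal.ofReal t ∧ P t ht} ≤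
      sInf {T : ℝ≥0∞ | ∃ t : ℝ, ∃ ht : 0 < t, T = ENNReal.ofReal t ∧ Q t ht} := by
  refine le_sInf ?_
  rintro _ ⟨s, hs, rfl, hQ⟩
  obtain ⟨t, ht, hts, hP⟩ := h s hs hQ
  exact sInf_le_of_le ⟨t, ht, rfl, hP⟩ (ENNReal.ofReal_le_ofReal hts)

theorem isCompact_Iic_subtype_Ici {α : Type*} [Preorder α] [TopologicalSpace α]
    [ClosedIciTopology α] [CompactIccSpace α] {a : α} (b : Set.Ici a) : IsCompact (Set.Iic b) := by
  have hpre : Set.Iic b = Subtype.val ⁻¹' Set.Icc a (b : α) := by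
    ext c
    exact ⟨fun hc => ⟨c.2, hc⟩, fun hc => hc.2⟩
  rw [hpre]
  exact isClosed_Ici.isClosedEmbedding_subtypeVal.isCompact_preimage isCompact_Icc

theorem exists_forall_apply_le_of_isCompact {ι X α : Type*} [Finite ι] [Nonempty ι]
    [TopologicalSpace X] [LinearOrder α] [TopologicalSpace α] [ClosedIciTopology α]
    {K : Set X} (hK : IsCompact K) (hne : K.Nonempty) {f : ι → X → α}
    (hf : ∀ i, ContinuousOn (f i) K) :
    ∃ i, ∃ p ∈ K, ∀ j, ∀ q ∈ K, f j q ≤ f i p := by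
  choose p hpK hp using fun i => hK.exists_isMaxOn hne (hf i)
  obtain ⟨i, hi⟩ := Finite.exists_max fun i => f i (p i)
  exact ⟨i, p i, hpK i, fun j q hq => (hp j hq).trans (hi j)⟩

section OneSidedLipschitz

variable {r₀ : ℝ} {n : ℕ} {D : PathSp r₀ n → EuclideanSpace ℝ (Fin n)} {κ : ℝ}

theorem maxCompDist_add_constPath_le (η : PathSp r₀ n) {M : ℝ} (hM : 0 ≤ M) :
    MaxCompDist (η + constPath r₀ n M) η ≤ M :=
  Real.iSup_le (fun i => Real.iSup_le (fun θ => by simp [constPath, abs_of_nonneg hM]) hM) hM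

/-- `D` is one-sided Lipschitz with constant `κ`: `ξ ≤ η + M𝟙` with `M ≥ 0` implies
`D ξ ≤ D η + κM𝟙`, componentwise. It condenses (A1) and (A5) into a bound on the increase of `D` in
terms of the positive part `(ξ - η)⁺` alone, of which `M` is an upper bound. -/
def OneSidedLipschitz (κ : ℝ) (D : PathSp r₀ n → EuclideanSpace ℝ (Fin n)) : Prop :=
  ∀ (ξ η : PathSp r₀ n) (M : ℝ), 0 ≤ M → PathLe ξ (η + constPath r₀ n M) →
    ∀ i, D ξ i ≤ D η i + κ * M

theorem OneSidedLipschitz.of_mono_of_norm_sub_le (hκ : 0 ≤ κ)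
    (hmono : ∀ ξ η : PathSp r₀ n, PathLe ξ η → ∀ i, D ξ i ≤ D η i)
    (hlip : ∀ ξ η : PathSp r₀ n, ‖D ξ - D η‖ ≤ κ * MaxCompDist ξ η) :
    OneSidedLipschitz κ D := by
  intro ξ η M hM hle i
  have hshift : D (η + constPath r₀ n M) i - D η i ≤ κ * M :=
    calc D (η + constPath r₀ n M) i - D η i
      _ ≤ ‖(D (η + constPath r₀ n M) - D η) i‖ := Real.le_norm_self _
      _ ≤ ‖D (η + constPath r₀ n M) - D η‖ := PiLp.norm_apply_le _ i
      _ ≤ κ * MaxCompDist (η + constPath r₀ n M) η := hlip _ _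
      _ ≤ κ * M := mul_le_mul_of_nonneg_left (maxCompDist_add_constPath_le η hM) hκ
  linarith [hmono _ _ hle i]

variable {x y : C(Set.Ici (-r₀ : ℝ), EuclideanSpace ℝ (Fin n))}

theorem pathLe_segmentAt_add_constPath (hr₀ : 0 < r₀) {t : ℝ} (ht : 0 ≤ t) {M : ℝ}
    (h : ∀ k, ∀ q ≤ iciPt hr₀ t ht, x q k - y q k ≤ M) :
    PathLe (segmentAt x t ht) (segmentAt y t ht + constPath r₀ n M) := fun θ k =>
  sub_le_iff_le_add'.mp (h k (segMap t ht θ) (add_le_of_nonpos_right θ.2.2))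

theorem OneSidedLipschitz.le_of_sub_le_sub (hD : OneSidedLipschitz κ D) (hκ : κ < 1)
    (hr₀ : 0 < r₀) (hinit : PathLe (segmentAt x 0 le_rfl) (segmentAt y 0 le_rfl))
    {s : ℝ} (hs : 0 ≤ s)
    (hle : ∀ t (ht : 0 < t), t ≤ s → ∀ i,
      x (iciPt hr₀ t ht.le) i - D (segmentAt x t ht.le) i ≤
        y (iciPt hr₀ t ht.le) i - D (segmentAt y t ht.le) i)
    (i : Fin n) : x (iciPt hr₀ s hs) i ≤ y (iciPt hr₀ s hs) i := by
  have : Nonempty (Fin n) := ⟨i⟩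
  obtain ⟨j, ⟨t, htr⟩, hts, hmax⟩ := exists_forall_apply_le_of_isCompact
    (f := fun (k : Fin n) q => x q k - y q k)
    (isCompact_Iic_subtype_Ici (iciPt hr₀ s hs)) Set.nonempty_Iic (fun k => by fun_prop)
  refine sub_nonpos.mp ((hmax i _ Set.self_mem_Iic).trans ?_)
  rcases le_or_gt t 0 with ht | ht
  · simpa [segmentAt, segMap] using hinit ⟨t, htr, ht⟩ j
  by_contra! hpos
  have hseg := pathLe_segmentAt_add_constPath hr₀ ht.le fun k q hq => hmax k q (hq.trans hts)
  have hcontract := hD _ _ _ hpos.le hseg j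
  have hcomp : x ⟨t, htr⟩ j - D (segmentAt x t ht.le) j ≤
      y ⟨t, htr⟩ j - D (segmentAt y t ht.le) j := hle t ht hts j
  linarith [mul_lt_of_lt_one_left hpos hκ]

end OneSidedLipschitz

theorem stmt0_general {r₀ : ℝ} (hr₀ : 0 < r₀) {n : ℕ}
    {D : PathSp r₀ n → EuclideanSpace ℝ (Fin n)} {κ : ℝ} (hκ : κ < 1)
    (hD : OneSidedLipschitz κ D)
    (x y : C(Set.Ici (-r₀ : ℝ), EuclideanSpace ℝ (Fin n)))
    (hinit : PathLe (segmentAt x 0 le_rfl) (segmentAt y 0 le_rfl)) :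
    sInf {T : ℝ≥0∞ | ∃ t : ℝ, ∃ ht : 0 < t, T = ENNReal.ofReal t ∧
        ∃ i, y (iciPt hr₀ t ht.le) i - D (segmentAt y t ht.le) i <
             x (iciPt hr₀ t ht.le) i - D (segmentAt x t ht.le) i} ≤
    sInf {T : ℝ≥0∞ | ∃ t : ℝ, ∃ ht : 0 < t, T = ENNReal.ofReal t ∧
        ∃ i, y (iciPt hr₀ t ht.le) i < x (iciPt hr₀ t ht.le) i} := by
  refine sInf_ofReal_le_sInf_ofReal ?_
  rintro s hs ⟨i, hi⟩
  by_contra! hle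
  exact (hD.le_of_sub_le_sub hκ hr₀ hinit hs.le hle i).not_gt hi

/-- under (A1) and (A5), the hitting time Υ of
{xⁱ(t) − Dⁱ(x_t) > x̄ⁱ(t) − Dⁱ(x̄_t) for some i} is dominated by the hitting time ρ of
{xⁱ(t) > x̄ⁱ(t) for some i}, for continuous x ≤_D-ordered initial segments. -/
theorem stmt0 {r₀ : ℝ} (hr₀ : 0 < r₀) {n : ℕ} (hn : 1 ≤ n)
    (D : PathSp r₀ n → EuclideanSpace ℝ (Fin n)) (κ : ℝ)
    (hκ₀ : 0 < κ) (hκ₁ : κ < 1)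
    (hA1zero : D 0 = 0)
    (hA1mono : ∀ ξ η : PathSp r₀ n, PathLe ξ η → ∀ i, D ξ i ≤ D η i)
    (hA5 : ∀ ξ η : PathSp r₀ n, ‖D ξ - D η‖ ≤ κ * MaxCompDist ξ η)
    (x y : C(Set.Ici (-r₀ : ℝ), EuclideanSpace ℝ (Fin n)))
    (hinit : PathLe (segmentAt x 0 le_rfl) (segmentAt y 0 le_rfl))
    (hinitD : ∀ i, x (iciPt hr₀ 0 le_rfl) i - D (segmentAt x 0 le_rfl) i ≤
      y (iciPt hr₀ 0 le_rfl) i - D (segmentAt y 0 le_rfl) i) :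
    sInf {T : ℝ≥0∞ | ∃ t : ℝ, ∃ ht : 0 < t, T = ENNReal.ofReal t ∧
        ∃ i, y (iciPt hr₀ t ht.le) i - D (segmentAt y t ht.le) i <
             x (iciPt hr₀ t ht.le) i - D (segmentAt x t ht.le) i} ≤
    sInf {T : ℝ≥0∞ | ∃ t : ℝ, ∃ ht : 0 < t, T = ENNReal.ofReal t ∧
        ∃ i, y (iciPt hr₀ t ht.le) i < x (iciPt hr₀ t ht.le) i} :=
  stmt0_general hr₀ hκ₁ (.of_mono_of_norm_sub_le hκ₀.le hA1mono hA5) x y hinit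

end
end

section
/- Assume D : 𝒞 → ℝⁿ satisfies (A1) and (A5). Then for every component index 1 ≤ i ≤ n and all ξ, η ∈ 𝒞 with ξⁱ(0) − Dⁱ(ξ) = ηⁱ(0) − Dⁱ(η), there exists ζ ∈ 𝒞 such that ζ ≤ ξ ∧ η (the componentwise pointwise minimum of ξ and η) and ζⁱ(0) − Dⁱ(ζ) = ξⁱ(0) − Dⁱ(ξ) = ηⁱ(0) − Dⁱ(η). -/
open MeasureTheory Filter
open scoped ENNReal NNReal

noncomputable section

/-! With `c` the common value of `ξⁱ(0) - Dⁱ(ξ)` and `ηⁱ(0) - Dⁱ(η)`, the path `ζ` is sought among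
the downward translates `ξ ∧ η - r`, `r ≥ 0`. The requirement
`ζⁱ(0) - Dⁱ(ζ) = c` reads `r = (ξ ∧ η)ⁱ(0) - c - Dⁱ(ξ ∧ η - r)`, a fixed-point equation for a
contraction of `ℝ`. Monotonicity of `D` gives `(ξ ∧ η)ⁱ(0) - Dⁱ(ξ ∧ η) ≥ c`, so this contraction
is nonnegative at `r = 0`, which forces its fixed point to be nonnegative. -/

theorem exists_ge_isFixedPt_of_contractingWith {K : ℝ≥0} {φ : ℝ → ℝ} (hφ : ContractingWith K φ)
    {a : ℝ} (ha : a ≤ φ a) : ∃ r, a ≤ r ∧ Function.IsFixedPt φ r := by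
  obtain ⟨r, hr⟩ : ∃ r, Function.IsFixedPt φ r := ⟨_, hφ.fixedPoint_isFixedPt⟩
  refine ⟨r, ?_, hr⟩
  by_contra! hra
  have hlt : φ a - φ r < a - r :=
    calc φ a - φ r ≤ |φ a - φ r| := le_abs_self _
      _ ≤ K * |a - r| := hφ.toLipschitzWith.dist_le_mul a r
      _ = K * (a - r) := by rw [abs_of_pos (sub_pos.2 hra)]
      _ < a - r := mul_lt_of_lt_one_left (sub_pos.2 hra) (NNReal.coe_lt_one.2 hφ.1)
  rw [hr.eq] at hlt
  linarith

section Paths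

variable {X ι : Type*} [TopologicalSpace X]

/-- The componentwise pointwise minimum `ξ ∧ η`; Mathlib puts no order on `EuclideanSpace`, so it
is not available as `ξ ⊓ η`. -/
def pathMin (ξ η : C(X, EuclideanSpace ℝ ι)) : C(X, EuclideanSpace ℝ ι) :=
  ⟨fun x => WithLp.toLp 2 fun j => min (ξ x j) (η x j), by fun_prop⟩

/-- The translate `ω - r𝟙` of a path by a constant path, with the sign chosen so that `r ≥ 0` moves
`ω` down. -/
def shiftDown (ω : C(X, EuclideanSpace ℝ ι)) (r : ℝ) : C(X, EuclideanSpace ℝ ι) :=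
  ⟨fun x => WithLp.toLp 2 fun j => ω x j - r, by fun_prop⟩

theorem pathMin_apply (ξ η : C(X, EuclideanSpace ℝ ι)) (x : X) (j : ι) :
    pathMin ξ η x j = min (ξ x j) (η x j) := rfl

theorem shiftDown_apply (ω : C(X, EuclideanSpace ℝ ι)) (r : ℝ) (x : X) (j : ι) :
    shiftDown ω r x j = ω x j - r := rfl

theorem shiftDown_zero (ω : C(X, EuclideanSpace ℝ ι)) : shiftDown ω 0 = ω := by
  ext x j
  rw [shiftDown_apply, sub_zero]

variable {F : C(X, EuclideanSpace ℝ ι) → ℝ} {x₀ : X} {i : ι} {c : ℝ}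

theorem le_pathMin_apply_sub (hmono : ∀ ξ η, (∀ x j, ξ x j ≤ η x j) → F ξ ≤ F η)
    {ξ η : C(X, EuclideanSpace ℝ ι)} (hξ : c ≤ ξ x₀ i - F ξ) (hη : c ≤ η x₀ i - F η) :
    c ≤ pathMin ξ η x₀ i - F (pathMin ξ η) := by
  have hFξ : F (pathMin ξ η) ≤ F ξ := hmono _ _ fun _ _ => min_le_left _ _
  have hFη : F (pathMin ξ η) ≤ F η := hmono _ _ fun _ _ => min_le_right _ _
  rw [pathMin_apply, le_sub_iff_add_le]
  exact le_min (by linarith) (by linarith)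

theorem exists_nonneg_shiftDown_apply_sub_eq {K : ℝ≥0} {ω : C(X, EuclideanSpace ℝ ι)}
    (hF : ContractingWith K fun r => F (shiftDown ω r)) (hc : c ≤ ω x₀ i - F ω) :
    ∃ r, 0 ≤ r ∧ shiftDown ω r x₀ i - F (shiftDown ω r) = c := by
  have hφ : ContractingWith K fun r => ω x₀ i - c - F (shiftDown ω r) :=
    ⟨hF.1, LipschitzWith.of_dist_le_mul fun r s => by
      simpa only [dist_sub_left] using hF.toLipschitzWith.dist_le_mul r s⟩
  have hφ₀ : 0 ≤ ω x₀ i - c - F (shiftDown ω 0) := by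
    rw [shiftDown_zero]
    linarith
  obtain ⟨r, hr, hfix⟩ := exists_ge_isFixedPt_of_contractingWith hφ hφ₀
  refine ⟨r, hr, ?_⟩
  rw [shiftDown_apply]
  linarith [hfix.eq]

theorem stmt2_general {K : ℝ≥0} (hmono : ∀ ξ η, (∀ x j, ξ x j ≤ η x j) → F ξ ≤ F η)
    (hF : ∀ ω, ContractingWith K fun r => F (shiftDown ω r))
    {ξ η : C(X, EuclideanSpace ℝ ι)} (hξ : c ≤ ξ x₀ i - F ξ) (hη : c ≤ η x₀ i - F η) :
    ∃ ζ : C(X, EuclideanSpace ℝ ι),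
      (∀ x j, ζ x j ≤ min (ξ x j) (η x j)) ∧ ζ x₀ i - F ζ = c := by
  obtain ⟨r, hr, hζ⟩ :=
    exists_nonneg_shiftDown_apply_sub_eq (hF _) (le_pathMin_apply_sub hmono hξ hη)
  exact ⟨shiftDown (pathMin ξ η) r, fun _ _ => sub_le_self _ hr, hζ⟩

end Paths

theorem maxCompDist_shiftDown_le {r₀ : ℝ} {n : ℕ} (ω : PathSp r₀ n) (r s : ℝ) :
    MaxCompDist (shiftDown ω r) (shiftDown ω s) ≤ |r - s| := by
  refine Real.iSup_le (fun j => Real.iSup_le (fun θ => ?_) (abs_nonneg _)) (abs_nonneg _)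
  rw [shiftDown_apply, shiftDown_apply, sub_sub_sub_cancel_left, abs_sub_comm]

theorem contractingWith_apply_shiftDown {r₀ : ℝ} {n : ℕ} {ι : Type*} [Fintype ι]
    {D : PathSp r₀ n → EuclideanSpace ℝ ι} {K : ℝ≥0} (hK : K < 1)
    (hD : ∀ ξ η, ‖D ξ - D η‖ ≤ K * MaxCompDist ξ η) (i : ι) (ω : PathSp r₀ n) :
    ContractingWith K fun r => D (shiftDown ω r) i := by
  refine ⟨hK, LipschitzWith.of_dist_le_mul fun r s => ?_⟩
  calc dist (D (shiftDown ω r) i) (D (shiftDown ω s) i)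
      ≤ ‖D (shiftDown ω r) - D (shiftDown ω s)‖ := by
        rw [dist_eq_norm]
        exact PiLp.norm_apply_le (D (shiftDown ω r) - D (shiftDown ω s)) i
    _ ≤ K * MaxCompDist (shiftDown ω r) (shiftDown ω s) := hD _ _
    _ ≤ K * dist r s :=
        mul_le_mul_of_nonneg_left (maxCompDist_shiftDown_le ω r s) K.coe_nonneg

/-- under (A1) and (A5), for ξ, η with ξⁱ(0) − Dⁱ(ξ) = ηⁱ(0) − Dⁱ(η) there
is ζ ≤ ξ ∧ η with ζⁱ(0) − Dⁱ(ζ) = ξⁱ(0) − Dⁱ(ξ) = ηⁱ(0) − Dⁱ(η). -/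
theorem stmt2 {r₀ : ℝ} (hr₀ : 0 < r₀) {n : ℕ} (hn : 1 ≤ n)
    (D : PathSp r₀ n → EuclideanSpace ℝ (Fin n)) (κ : ℝ)
    (hκ₀ : 0 < κ) (hκ₁ : κ < 1)
    (hA1zero : D 0 = 0)
    (hA1mono : ∀ ξ η : PathSp r₀ n, PathLe ξ η → ∀ i, D ξ i ≤ D η i)
    (hA5 : ∀ ξ η : PathSp r₀ n, ‖D ξ - D η‖ ≤ κ * MaxCompDist ξ η)
    (i : Fin n) (ξ η : PathSp r₀ n)
    (heq : ξ (zpt hr₀) i - D ξ i = η (zpt hr₀) i - D η i) :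
    ∃ ζ : PathSp r₀ n,
      (∀ (θ : Set.Icc (-r₀) (0:ℝ)) (j : Fin n), ζ θ j ≤ min (ξ θ j) (η θ j)) ∧
      ζ (zpt hr₀) i - D ζ i = ξ (zpt hr₀) i - D ξ i ∧
      ζ (zpt hr₀) i - D ζ i = η (zpt hr₀) i - D η i := by
  obtain ⟨ζ, hle, hζ⟩ := stmt2_general (fun _ _ h => hA1mono _ _ h i)
    (contractingWith_apply_shiftDown (K := ⟨κ, hκ₀.le⟩) hκ₁ hA5 i) le_rfl heq.le
  exact ⟨ζ, hle, hζ, hζ.trans heq⟩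

end
end

section
/- Assume D : 𝒞 → ℝⁿ satisfies (A1) and (A5). Then for any two Borel probability measures μ, ν on 𝒞 with finite second moment, there exists a Borel probability measure μ̃ on 𝒞 with finite second moment such that μ̃ ≤_D μ and μ̃ ≤_D ν. -/
/-!
A constant path `-r𝟙` with `r` a large multiple of `‖ξ‖` lies below `ξ` in the `D`-order: the gap at
time `0` is at least `r - ‖ξ‖`, whereas the contraction `D` changes by at most `κ (‖ξ‖ + r)`.
Sampling `(ξ, η)` from `μ.prod ν` and taking `r` proportional to `‖ξ‖ + ‖η‖`, the law of `-r𝟙` is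
below both marginals, and its moments are controlled by those of `μ` and `ν`.
-/

open MeasureTheory Filter
open scoped ENNReal NNReal

noncomputable section

theorem memLp_norm_two_iff {E : Type*} [NormedAddCommGroup E] [MeasurableSpace E]
    [OpensMeasurableSpace E] {μ : Measure E} :
    MemLp (fun x => ‖x‖) 2 μ ↔ Integrable (fun x : E => ‖x‖ ^ 2) μ :=
  memLp_two_iff_integrable_sq measurable_norm.aestronglyMeasurable

section

variable {r₀ : ℝ} {n : ℕ}

theorem constPath_apply (r : ℝ) (θ : Set.Icc (-r₀) (0 : ℝ)) (i : Fin n) :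
    constPath r₀ n r θ i = r := rfl

theorem constPath_eq_smul (r : ℝ) : constPath r₀ n r = r • constPath r₀ n 1 := by
  ext θ i
  simp [constPath_apply]

theorem norm_constPath (r : ℝ) : ‖constPath r₀ n r‖ = ‖r‖ * ‖constPath r₀ n 1‖ := by
  rw [constPath_eq_smul, norm_smul]

theorem continuous_constPath : Continuous (constPath r₀ n) := by
  rw [funext constPath_eq_smul]
  exact continuous_id.smul continuous_const

theorem abs_apply_apply_le_norm (ξ : PathSp r₀ n) (θ : Set.Icc (-r₀) (0 : ℝ)) (i : Fin n) :
    |ξ θ i| ≤ ‖ξ‖ :=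
  (PiLp.norm_apply_le (ξ θ) i).trans (ξ.norm_coe_le_norm θ)

theorem maxCompDist_constPath_le (ξ : PathSp r₀ n) (r : ℝ) :
    MaxCompDist ξ (constPath r₀ n r) ≤ ‖ξ‖ + |r| := by
  have hnonneg : 0 ≤ ‖ξ‖ + |r| := by positivity
  refine Real.iSup_le (fun i => Real.iSup_le (fun θ => ?_) hnonneg) hnonneg
  calc |ξ θ i - r| ≤ |ξ θ i| + |r| := abs_sub _ _
    _ ≤ ‖ξ‖ + |r| := by gcongr; exact abs_apply_apply_le_norm ξ θ i

theorem pathLe_constPath_neg {ξ : PathSp r₀ n} {r : ℝ} (h : ‖ξ‖ ≤ r) :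
    PathLe (constPath r₀ n (-r)) ξ := fun θ i =>
  neg_le_of_abs_le ((abs_apply_apply_le_norm ξ θ i).trans h)

theorem pathLeD_constPath_neg (hr₀ : 0 < r₀) {D : PathSp r₀ n → EuclideanSpace ℝ (Fin n)} {κ : ℝ}
    (hκ₀ : 0 ≤ κ) (hκ₁ : κ < 1) (hD : ∀ ξ η i, |D ξ i - D η i| ≤ κ * MaxCompDist ξ η)
    {ξ : PathSp r₀ n} {r : ℝ} (hr : (1 + κ) / (1 - κ) * ‖ξ‖ ≤ r) :
    PathLeD hr₀ D (constPath r₀ n (-r)) ξ := by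
  have hgap : (1 + κ) * ‖ξ‖ ≤ (1 - κ) * r := by
    rwa [div_mul_eq_mul_div, div_le_iff₀' (sub_pos.2 hκ₁)] at hr
  have hnorm : ‖ξ‖ ≤ r := by
    refine le_trans (le_mul_of_one_le_left (norm_nonneg ξ) ?_) hr
    rw [one_le_div (sub_pos.2 hκ₁)]
    linarith
  refine ⟨pathLe_constPath_neg hnorm, fun i => ?_⟩
  have hD_le : D ξ i - D (constPath r₀ n (-r)) i ≤ κ * (‖ξ‖ + r) :=
    calc D ξ i - D (constPath r₀ n (-r)) i
        ≤ κ * MaxCompDist ξ (constPath r₀ n (-r)) := (le_abs_self _).trans (hD _ _ i)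
      _ ≤ κ * (‖ξ‖ + |-r|) := by gcongr; exact maxCompDist_constPath_le ξ (-r)
      _ = κ * (‖ξ‖ + r) := by rw [abs_neg, abs_of_nonneg ((norm_nonneg ξ).trans hnorm)]
  have hξ_zero : -‖ξ‖ ≤ ξ (zpt hr₀) i := neg_le_of_abs_le (abs_apply_apply_le_norm ξ _ i)
  rw [constPath_apply]
  linarith

variable {Ω : Type*} [MeasurableSpace Ω] {P : Measure Ω}

theorem memLp_norm_constPath {p : ℝ≥0∞} {R : Ω → ℝ} (hR : MemLp R p P) :
    MemLp (fun ω => ‖constPath r₀ n (R ω)‖) p P := by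
  rw [funext fun ω => norm_constPath (R ω)]
  exact hR.norm.mul_const _

theorem measLeD_map_of_ae_pathLeD [IsFiniteMeasure P] (hr₀ : 0 < r₀)
    {D : PathSp r₀ n → EuclideanSpace ℝ (Fin n)} {X Y : Ω → PathSp r₀ n}
    (hX : AEMeasurable X P) (hY : AEMeasurable Y P) (h : ∀ᵐ ω ∂P, PathLeD hr₀ D (X ω) (Y ω)) :
    MeasLeD hr₀ D (P.map X) (P.map Y) := by
  rintro f hf ⟨C, hC⟩ hmono
  have hint {Z : Ω → PathSp r₀ n} (hZ : AEMeasurable Z P) : Integrable (fun ω => f (Z ω)) P :=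
    .of_bound (hf.comp_aemeasurable hZ).aestronglyMeasurable C (.of_forall fun ω => hC (Z ω))
  rw [integral_map hX hf.aestronglyMeasurable, integral_map hY hf.aestronglyMeasurable]
  exact integral_mono_ae (hint hX) (hint hY) (h.mono fun ω => hmono _ _)

theorem stmt3_general (hr₀ : 0 < r₀) {D : PathSp r₀ n → EuclideanSpace ℝ (Fin n)} {κ : ℝ}
    (hκ₀ : 0 ≤ κ) (hκ₁ : κ < 1) (hD : ∀ ξ η i, |D ξ i - D η i| ≤ κ * MaxCompDist ξ η)
    {p : ℝ≥0∞} {μ ν : Measure (PathSp r₀ n)} [IsProbabilityMeasure μ] [IsProbabilityMeasure ν]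
    (hμ : MemLp (fun ξ => ‖ξ‖) p μ) (hν : MemLp (fun ξ => ‖ξ‖) p ν) :
    ∃ μ' : Measure (PathSp r₀ n), IsProbabilityMeasure μ' ∧ MemLp (fun ξ => ‖ξ‖) p μ' ∧
      MeasLeD hr₀ D μ' μ ∧ MeasLeD hr₀ D μ' ν := by
  let R : PathSp r₀ n × PathSp r₀ n → ℝ := fun q => (1 + κ) / (1 - κ) * (‖q.1‖ + ‖q.2‖)
  let X : PathSp r₀ n × PathSp r₀ n → PathSp r₀ n := fun q => constPath r₀ n (-R q)
  have hR : Measurable R := (measurable_fst.norm.add measurable_snd.norm).const_mul _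
  have hX : Measurable X := continuous_constPath.measurable.comp hR.neg
  have hR_memLp : MemLp R p (μ.prod ν) := ((hμ.comp_fst ν).add (hν.comp_snd μ)).const_mul _
  have hfactor : 0 ≤ (1 + κ) / (1 - κ) := div_nonneg (by linarith) (sub_pos.2 hκ₁).le
  have hX_le {q : PathSp r₀ n × PathSp r₀ n} {ξ : PathSp r₀ n} (hξ : ‖ξ‖ ≤ ‖q.1‖ + ‖q.2‖) :
      PathLeD hr₀ D (X q) ξ :=
    pathLeD_constPath_neg hr₀ hκ₀ hκ₁ hD (mul_le_mul_of_nonneg_left hξ hfactor)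
  refine ⟨(μ.prod ν).map X, Measure.isProbabilityMeasure_map hX.aemeasurable, ?_, ?_, ?_⟩
  · rw [memLp_map_measure_iff measurable_norm.aestronglyMeasurable hX.aemeasurable]
    exact memLp_norm_constPath hR_memLp.neg
  · simpa only [Measure.map_fst_prod, measure_univ, one_smul] using
      measLeD_map_of_ae_pathLeD (P := μ.prod ν) hr₀ hX.aemeasurable measurable_fst.aemeasurable
        (.of_forall fun q => hX_le (le_add_of_nonneg_right (norm_nonneg q.2)))
  · simpa only [Measure.map_snd_prod, measure_univ, one_smul] using
      measLeD_map_of_ae_pathLeD (P := μ.prod ν) hr₀ hX.aemeasurable measurable_snd.aemeasurable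
        (.of_forall fun q => hX_le (le_add_of_nonneg_left (norm_nonneg q.1)))

end

/-- under (A1) and (A5), for any Borel probability measures μ, ν on 𝒞 with
finite second moment there is a Borel probability measure μ̃ with finite second moment
with μ̃ ≤_D μ and μ̃ ≤_D ν. -/
theorem stmt3 {r₀ : ℝ} (hr₀ : 0 < r₀) {n : ℕ} (hn : 1 ≤ n)
    (D : PathSp r₀ n → EuclideanSpace ℝ (Fin n)) (κ : ℝ)
    (hκ₀ : 0 < κ) (hκ₁ : κ < 1)
    (hA1zero : D 0 = 0)
    (hA1mono : ∀ ξ η : PathSp r₀ n, PathLe ξ η → ∀ i, D ξ i ≤ D η i)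
    (hA5 : ∀ ξ η : PathSp r₀ n, ‖D ξ - D η‖ ≤ κ * MaxCompDist ξ η)
    (μ ν : Measure (PathSp r₀ n))
    (hμ : IsProbabilityMeasure μ) (hν : IsProbabilityMeasure ν)
    (hμ2 : Integrable (fun ξ : PathSp r₀ n => ‖ξ‖^2) μ)
    (hν2 : Integrable (fun ξ : PathSp r₀ n => ‖ξ‖^2) ν) :
    ∃ μ' : Measure (PathSp r₀ n), IsProbabilityMeasure μ' ∧
      Integrable (fun ξ : PathSp r₀ n => ‖ξ‖^2) μ' ∧
      MeasLeD hr₀ D μ' μ ∧ MeasLeD hr₀ D μ' ν := by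
  simpa only [memLp_norm_two_iff] using stmt3_general hr₀ hκ₀.le hκ₁ (fun ξ η i =>
    (PiLp.norm_apply_le _ i).trans (hA5 ξ η)) (memLp_norm_two_iff.2 hμ2) (memLp_norm_two_iff.2 hν2)

end
end
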